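/- Let S = K[x_1,…,x_n] and let I ⊂ S be a stable monomial ideal such that S/I is a Cohen-Macaulay graded K-algebra of Krull dimension d. Then x_n, x_{n−1},…,x_{n−d+1} is a linear system of parameters for S/I, and I is generated by monomials of degree ≤ deg h_{S/I}(t) + 1. -/

import Mathlib

open MvPolynomial

/-- A *stable* monomial ideal of `S = K[x₁,…,x_n]`: a monomial ideal `I` such that for every
monomial `m ∈ I`, letting `jmax = max(m)` be the largest index of a variable dividing `m`,
one has `m · (x_i / x_{jmax}) ∈ I` for every `i < jmax`. -/
def IsStableMonomialIdeal {K : Type*} [CommSemiring K] {n : ℕ}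
    (I : Ideal (MvPolynomial (Fin n) K)) : Prop :=
  (∃ M : Set (Fin n →₀ ℕ),
      I = Ideal.span ((fun m => (monomial m (1 : K) : MvPolynomial (Fin n) K)) '' M)) ∧
    ∀ m : Fin n →₀ ℕ, (monomial m (1 : K) : MvPolynomial (Fin n) K) ∈ I →
      ∀ jmax : Fin n, m jmax ≠ 0 → (∀ j, jmax < j → m j = 0) →
        ∀ i : Fin n, i < jmax →
          (monomial (m + Finsupp.single i 1 - Finsupp.single jmax 1) (1 : K) :
            MvPolynomial (Fin n) K) ∈ I

set_option synthInstance.maxHeartbeats 1000000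
set_option maxHeartbeats 1000000

/-! If `I` contained no monomial in the variables `x_i, …, x_n` alone, the polynomial ring in those
variables would be a quotient of `S/I`; so there is one as soon as `n - i + 1 > dim S/I`, and
stability turns it into a power of `x_i`. Hence all but the last `d` variables are nilpotent in
`S/I`.

If variables form a regular sequence on `S/I`, no minimal generator of `I` involves them, and
killing them one at a time multiplies the Hilbert series by `1 - t` each time. So `h` counts the
monomials outside `I` in the remaining variables; there are none of degree greater than `deg h`.
Dividing a minimal generator by one of its variables gives such a monomial, which therefore has
degree at most `deg h`. -/

section RegularSequence

variable {R : Type*} [CommRing R]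

lemma isSMulRegular_quotient_smul_top_iff (I J : Ideal R) (r : R) :
    IsSMulRegular ((R ⧸ I) ⧸ (J • ⊤ : Submodule R (R ⧸ I))) r ↔ IsSMulRegular (R ⧸ I ⊔ J) r := by
  have mk_mem_iff (x : R) :
      Ideal.Quotient.mk I x ∈ (J • ⊤ : Submodule R (R ⧸ I)) ↔ x ∈ I ⊔ J := by
    rw [Ideal.smul_top_eq_map, Submodule.restrictScalars_mem, Ideal.Quotient.algebraMap_eq,
      Ideal.mem_quotient_iff_mem_sup, sup_comm]
  simp_rw [isSMulRegular_quotient_iff_mem_of_smul_mem, Ideal.Quotient.mk_surjective.forall,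
    ← mk_mem_iff]
  rfl

lemma isWeaklyRegular_quotient_concat_iff (I : Ideal R) (rs : List R) (r : R) :
    RingTheory.Sequence.IsWeaklyRegular (R ⧸ I) (rs ++ [r]) ↔
      RingTheory.Sequence.IsWeaklyRegular (R ⧸ I) rs ∧
        IsSMulRegular (R ⧸ I ⊔ Ideal.ofList rs) r := by
  rw [RingTheory.Sequence.isWeaklyRegular_append_iff,
    RingTheory.Sequence.isWeaklyRegular_singleton_iff, isSMulRegular_quotient_smul_top_iff]

end RegularSequence

lemma exists_eq_add_single {σ : Type*} {m : σ →₀ ℕ} {k : σ} (hk : m k ≠ 0) :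
    ∃ m', m = m' + Finsupp.single k 1 :=
  ⟨_, (tsub_add_cancel_of_le (Finsupp.single_le_iff.2 (Nat.one_le_iff_ne_zero.2 hk))).symm⟩

section MonomialIdeal

variable {σ R : Type*} [CommSemiring R]

/-- A monomial ideal: one generated by monomials, which are given by their exponents. -/
def IsMonomialIdeal (I : Ideal (MvPolynomial σ R)) : Prop :=
  ∃ M : Set (σ →₀ ℕ), I = Ideal.span ((fun m => monomial m (1 : R)) '' M)

lemma monomial_mem_of_le {I : Ideal (MvPolynomial σ R)} {a b : σ →₀ ℕ} (hab : a ≤ b)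
    (ha : monomial a (1 : R) ∈ I) : monomial b (1 : R) ∈ I :=
  I.mem_of_dvd (monomial_dvd_monomial.2 ⟨.inr hab, dvd_rfl⟩) ha

lemma ofList_map_X (L : List σ) :
    Ideal.ofList (L.map (X : σ → MvPolynomial σ R)) = Ideal.span (X '' {k | k ∈ L}) := by
  simp [Ideal.ofList, Set.image]

lemma isMonomialIdeal_span_X_image (s : Set σ) :
    IsMonomialIdeal (Ideal.span (X '' s : Set (MvPolynomial σ R))) :=
  ⟨(fun k => Finsupp.single k 1) '' s, by rw [Set.image_image]; rfl⟩

lemma monomial_mem_span_X_image_iff [Nontrivial R] {s : Set σ} {m : σ →₀ ℕ} :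
    monomial m (1 : R) ∈ Ideal.span (X '' s : Set (MvPolynomial σ R)) ↔ ∃ k ∈ s, m k ≠ 0 := by
  classical
  simp [mem_ideal_span_X_image, support_monomial]

namespace IsMonomialIdeal

variable {I J : Ideal (MvPolynomial σ R)}

lemma sup (hI : IsMonomialIdeal I) (hJ : IsMonomialIdeal J) : IsMonomialIdeal (I ⊔ J) := by
  obtain ⟨M, rfl⟩ := hI
  obtain ⟨N, rfl⟩ := hJ
  exact ⟨M ∪ N, by rw [Set.image_union, Ideal.span_union]⟩

lemma sup_ofList_map_X (hI : IsMonomialIdeal I) (L : List σ) :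
    IsMonomialIdeal (I ⊔ Ideal.ofList (L.map X)) :=
  hI.sup (ofList_map_X (R := R) L ▸ isMonomialIdeal_span_X_image _)

variable [Nontrivial R]

lemma monomial_mem_span_iff {M : Set (σ →₀ ℕ)} {m : σ →₀ ℕ} :
    monomial m (1 : R) ∈ Ideal.span ((fun m => monomial m (1 : R)) '' M) ↔ ∃ s ∈ M, s ≤ m := by
  classical
  simp [mem_ideal_span_monomial_image, support_monomial]

lemma mem_iff (hI : IsMonomialIdeal I) {f : MvPolynomial σ R} :
    f ∈ I ↔ ∀ m ∈ f.support, monomial m (1 : R) ∈ I := by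
  obtain ⟨M, rfl⟩ := hI
  simp_rw [monomial_mem_span_iff, mem_ideal_span_monomial_image]

lemma monomial_mem_sup_iff (hI : IsMonomialIdeal I) (hJ : IsMonomialIdeal J) {m : σ →₀ ℕ} :
    monomial m (1 : R) ∈ I ⊔ J ↔ monomial m (1 : R) ∈ I ∨ monomial m (1 : R) ∈ J := by
  obtain ⟨M, rfl⟩ := hI
  obtain ⟨N, rfl⟩ := hJ
  rw [← Ideal.span_union, ← Set.image_union]
  simp only [monomial_mem_span_iff, Set.mem_union, or_and_right, exists_or]

lemma eq_span_minimal (hI : IsMonomialIdeal I) :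
    I = Ideal.span ((fun m => monomial m (1 : R)) ''
      {m | Minimal (fun m => monomial m (1 : R) ∈ I) m}) := by
  apply le_antisymm
  · intro f hf
    rw [mem_ideal_span_monomial_image]
    intro m hm
    obtain ⟨b, hbm, hb⟩ := exists_minimal_le_of_wellFoundedLT
      (fun m => monomial m (1 : R) ∈ I) m (hI.mem_iff.1 hf m hm)
    exact ⟨b, hb, hbm⟩
  · rw [Ideal.span_le, Set.image_subset_iff]
    exact fun m (hm : Minimal _ m) => hm.prop

end IsMonomialIdeal

lemma monomial_notMem_of_minimal_add_single {I : Ideal (MvPolynomial σ R)} {m : σ →₀ ℕ} {k : σ}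
    (hm : Minimal (fun m => monomial m (1 : R) ∈ I) (m + Finsupp.single k 1)) :
    monomial m (1 : R) ∉ I :=
  hm.not_prop_of_lt (lt_add_of_pos_right m (by simp [pos_iff_ne_zero]))

end MonomialIdeal

section HilbertSeries

variable {σ R : Type*} [CommRing R]

/-- The Hilbert series of `S/I`, for the standard grading of `S`; the degree `i` part of `S/I` is
the image of the homogeneous polynomials of degree `i`. -/
noncomputable def hilbertSeries (I : Ideal (MvPolynomial σ R)) : PowerSeries ℤ :=
  PowerSeries.mk fun i => (Module.finrank R
    (Submodule.map (Ideal.Quotient.mkₐ R I).toLinearMap (homogeneousSubmodule σ R i)) : ℤ)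

/-- The exponents of the standard monomials of degree `i`, i.e. of those not in `I`. -/
def standardMonomials (I : Ideal (MvPolynomial σ R)) (i : ℕ) : Set (σ →₀ ℕ) :=
  {m | m.degree = i ∧ monomial m (1 : R) ∉ I}

variable {I : Ideal (MvPolynomial σ R)}

lemma finite_standardMonomials [Finite σ] (i : ℕ) : (standardMonomials I i).Finite :=
  (Finsupp.finite_of_degree_eq i).subset fun _ hm => hm.1

lemma map_mkₐ_homogeneousSubmodule_eq_span (I : Ideal (MvPolynomial σ R)) (i : ℕ) :
    Submodule.map (Ideal.Quotient.mkₐ R I).toLinearMap (homogeneousSubmodule σ R i) =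
      Submodule.span R (Set.range fun m : standardMonomials I i =>
        Ideal.Quotient.mkₐ R I (monomial m.1 1)) := by
  have homogeneous_eq : homogeneousSubmodule σ R i =
      Submodule.span R ((fun m => monomial m 1) '' {m | m.degree = i}) :=
    (homogeneousSubmodule_eq_finsupp_supported σ R i).trans (restrictSupport_eq_span R _)
  rw [homogeneous_eq, Submodule.map_span]
  apply le_antisymm
  · rw [Submodule.span_le]
    rintro _ ⟨_, ⟨m, hm, rfl⟩, rfl⟩
    by_cases hmI : monomial m (1 : R) ∈ I
    · have image_eq_zero : (Ideal.Quotient.mkₐ R I).toLinearMap (monomial m (1 : R)) = 0 :=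
        Ideal.Quotient.eq_zero_iff_mem.2 hmI
      simp only [image_eq_zero, SetLike.mem_coe, zero_mem]
    · exact Submodule.subset_span ⟨⟨m, hm, hmI⟩, rfl⟩
  · apply Submodule.span_mono
    rintro _ ⟨m, rfl⟩
    exact ⟨_, ⟨m.1, m.2.1, rfl⟩, rfl⟩

lemma monomial_add_single_mem_iff {k : σ} (hk : IsSMulRegular (MvPolynomial σ R ⧸ I)
    (X k : MvPolynomial σ R)) {m : σ →₀ ℕ} :
    monomial (m + Finsupp.single k 1) (1 : R) ∈ I ↔ monomial m (1 : R) ∈ I := by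
  refine ⟨fun hm => ?_, monomial_mem_of_le le_self_add⟩
  refine (isSMulRegular_quotient_iff_mem_of_smul_mem I _).1 hk _ ?_
  rwa [smul_eq_mul, mul_comm, ← pow_one (X k), ← monomial_add_single]

variable [Nontrivial R]

lemma linearIndependent_standardMonomials (hI : IsMonomialIdeal I) (i : ℕ) :
    LinearIndependent R fun m : standardMonomials I i =>
      Ideal.Quotient.mkₐ R I (monomial m.1 1) := by
  have monomials_linearIndependent :
      LinearIndependent R fun m : standardMonomials I i => monomial m.1 (1 : R) := by
    simpa only [Function.comp_def, coe_basisMonomials] using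
      (basisMonomials σ R).linearIndependent.comp _ Subtype.val_injective
  refine monomials_linearIndependent.map (f := (Ideal.Quotient.mkₐ R I).toLinearMap) ?_
  rw [Submodule.disjoint_def, ← Set.image_eq_range (fun m => monomial m (1 : R)),
    ← restrictSupport_eq_span]
  intro f hf hfI
  replace hfI : f ∈ I := Ideal.Quotient.eq_zero_iff_mem.1 hfI
  rw [mem_restrictSupport_iff] at hf
  rw [← support_eq_empty, Finset.eq_empty_iff_forall_notMem]
  exact fun m hm => (hf hm).2 (hI.mem_iff.1 hfI m hm)

lemma coeff_hilbertSeries (hI : IsMonomialIdeal I) (i : ℕ) :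
    PowerSeries.coeff i (hilbertSeries I) = (standardMonomials I i).ncard := by
  rw [hilbertSeries, PowerSeries.coeff_mk, map_mkₐ_homogeneousSubmodule_eq_span,
    Module.finrank_eq_nat_card_basis (.span (linearIndependent_standardMonomials hI i)),
    Nat.card_coe_set_eq]

lemma mem_standardMonomials_sup_span_X_iff (hI : IsMonomialIdeal I) {k : σ} {i : ℕ}
    {m : σ →₀ ℕ} :
    m ∈ standardMonomials (I ⊔ Ideal.span {X k}) i ↔ m ∈ standardMonomials I i ∧ m k = 0 := by
  have monomial_mem_iff :
      monomial m (1 : R) ∈ I ⊔ Ideal.span {X k} ↔ monomial m (1 : R) ∈ I ∨ m k ≠ 0 := by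
    rw [← Set.image_singleton, hI.monomial_mem_sup_iff (isMonomialIdeal_span_X_image {k}),
      monomial_mem_span_X_image_iff]
    simp
  simp [standardMonomials, monomial_mem_iff, and_assoc]

lemma standardMonomials_succ (hI : IsMonomialIdeal I) {k : σ}
    (hk : IsSMulRegular (MvPolynomial σ R ⧸ I) (X k : MvPolynomial σ R)) (i : ℕ) :
    standardMonomials I (i + 1) = standardMonomials (I ⊔ Ideal.span {X k}) (i + 1) ∪
      (· + Finsupp.single k 1) '' standardMonomials I i := by
  ext m
  rw [Set.mem_union, mem_standardMonomials_sup_span_X_iff hI]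
  constructor
  · intro hm
    by_cases hmk : m k = 0
    · exact .inl ⟨hm, hmk⟩
    · obtain ⟨m, rfl⟩ := exists_eq_add_single hmk
      exact .inr ⟨m, ⟨by simpa using hm.1, (monomial_add_single_mem_iff hk).not.1 hm.2⟩, rfl⟩
  · rintro (⟨hm, -⟩ | ⟨m, ⟨hdeg, hm⟩, rfl⟩)
    · exact hm
    · exact ⟨by simp [hdeg], by rwa [monomial_add_single_mem_iff hk]⟩

lemma ncard_standardMonomials_succ [Finite σ] (hI : IsMonomialIdeal I) {k : σ}
    (hk : IsSMulRegular (MvPolynomial σ R ⧸ I) (X k : MvPolynomial σ R)) (i : ℕ) :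
    (standardMonomials I (i + 1)).ncard =
      (standardMonomials (I ⊔ Ideal.span {X k}) (i + 1)).ncard +
        (standardMonomials I i).ncard := by
  rw [standardMonomials_succ hI hk, Set.ncard_union_eq _ (finite_standardMonomials _)
    ((finite_standardMonomials _).image _), Set.ncard_image_of_injective _ (add_left_injective _)]
  rw [Set.disjoint_left]
  rintro _ hm ⟨m, -, rfl⟩
  simpa using ((mem_standardMonomials_sup_span_X_iff hI).1 hm).2

lemma hilbertSeries_sup_span_X [Finite σ] (hI : IsMonomialIdeal I) {k : σ}
    (hk : IsSMulRegular (MvPolynomial σ R ⧸ I) (X k : MvPolynomial σ R)) :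
    hilbertSeries (I ⊔ Ideal.span {X k}) = hilbertSeries I * (1 - PowerSeries.X) := by
  have hIk : IsMonomialIdeal (I ⊔ Ideal.span {X k}) :=
    hI.sup (by simpa using isMonomialIdeal_span_X_image {k})
  ext i
  rw [mul_sub, mul_one, map_sub, coeff_hilbertSeries hIk, coeff_hilbertSeries hI]
  cases i with
  | zero =>
    have degree_zero_eq : standardMonomials (I ⊔ Ideal.span {X k}) 0 = standardMonomials I 0 := by
      ext m
      rw [mem_standardMonomials_sup_span_X_iff hI, and_iff_left_iff_imp]
      rintro ⟨hm, -⟩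
      simp [(Finsupp.degree_eq_zero_iff m).1 hm]
    simp [degree_zero_eq]
  | succ i =>
    rw [PowerSeries.coeff_succ_mul_X, coeff_hilbertSeries hI, ncard_standardMonomials_succ hI hk]
    simp

end HilbertSeries

section RegularVariables

variable {σ R : Type*} [CommRing R] [Nontrivial R] {I : Ideal (MvPolynomial σ R)} {L : List σ}

lemma monomial_mem_sup_ofList_map_X_iff (hI : IsMonomialIdeal I) {m : σ →₀ ℕ} :
    monomial m (1 : R) ∈ I ⊔ Ideal.ofList (L.map X) ↔
      monomial m (1 : R) ∈ I ∨ ∃ k ∈ L, m k ≠ 0 := by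
  rw [ofList_map_X, hI.monomial_mem_sup_iff (isMonomialIdeal_span_X_image _),
    monomial_mem_span_X_image_iff]
  rfl

lemma hilbertSeries_sup_ofList_map_X [Finite σ] (hI : IsMonomialIdeal I)
    (hL : RingTheory.Sequence.IsWeaklyRegular (MvPolynomial σ R ⧸ I)
      (L.map (X : σ → MvPolynomial σ R))) :
    hilbertSeries (I ⊔ Ideal.ofList (L.map X)) =
      hilbertSeries I * (1 - PowerSeries.X) ^ L.length := by
  induction L using List.reverseRecOn with
  | nil => simp
  | append_singleton L k ih =>
    rw [List.map_append, List.map_singleton, isWeaklyRegular_quotient_concat_iff] at hL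
    rw [List.map_append, List.map_singleton, Ideal.ofList_append, Ideal.ofList_singleton,
      ← sup_assoc, hilbertSeries_sup_span_X (hI.sup_ofList_map_X _) hL.2, ih hL.1,
      List.length_append, List.length_singleton, pow_succ, mul_assoc]

lemma eq_zero_of_minimal (hI : IsMonomialIdeal I)
    (hL : RingTheory.Sequence.IsWeaklyRegular (MvPolynomial σ R ⧸ I)
      (L.map (X : σ → MvPolynomial σ R)))
    {m : σ →₀ ℕ} (hm : Minimal (fun m => monomial m (1 : R) ∈ I) m) : ∀ k ∈ L, m k = 0 := by
  induction L using List.reverseRecOn with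
  | nil => simp
  | append_singleton L k ih =>
    rw [List.map_append, List.map_singleton, isWeaklyRegular_quotient_concat_iff] at hL
    suffices m k = 0 by simpa [or_imp, forall_and] using ⟨ih hL.1, this⟩
    by_contra hmk
    obtain ⟨m, rfl⟩ := exists_eq_add_single hmk
    have quotient_mem : monomial m (1 : R) ∈ I ⊔ Ideal.ofList (L.map X) :=
      (monomial_add_single_mem_iff hL.2).1 (Ideal.mem_sup_left hm.prop)
    rcases (monomial_mem_sup_ofList_map_X_iff hI).1 quotient_mem with hmem | ⟨l, hlL, hl⟩
    · exact monomial_notMem_of_minimal_add_single hm hmem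
    · exact hl (add_eq_zero.1 (ih hL.1 l hlL)).1

lemma monomial_mem_of_natDegree_lt [Finite σ] (hI : IsMonomialIdeal I)
    (hL : RingTheory.Sequence.IsWeaklyRegular (MvPolynomial σ R ⧸ I)
      (L.map (X : σ → MvPolynomial σ R)))
    {h : Polynomial ℤ}
    (hh : (h : PowerSeries ℤ) = hilbertSeries I * (1 - PowerSeries.X) ^ L.length)
    {m : σ →₀ ℕ} (hm : ∀ k ∈ L, m k = 0) (hdeg : h.natDegree < m.degree) :
    monomial m (1 : R) ∈ I := by
  have ncard_eq_zero :
      (standardMonomials (I ⊔ Ideal.ofList (L.map X)) m.degree).ncard = 0 := by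
    rw [← Int.natCast_eq_zero, ← coeff_hilbertSeries (hI.sup_ofList_map_X _),
      hilbertSeries_sup_ofList_map_X hI hL, ← hh, Polynomial.coeff_coe,
      Polynomial.coeff_eq_zero_of_natDegree_lt hdeg]
  rw [Set.ncard_eq_zero (finite_standardMonomials _)] at ncard_eq_zero
  by_contra hmI
  refine Set.eq_empty_iff_forall_notMem.1 ncard_eq_zero m ⟨rfl, ?_⟩
  rw [monomial_mem_sup_ofList_map_X_iff hI]
  simpa [hmI] using hm

theorem degree_le_of_minimal [Finite σ] (hI : IsMonomialIdeal I)
    (hL : RingTheory.Sequence.IsWeaklyRegular (MvPolynomial σ R ⧸ I)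
      (L.map (X : σ → MvPolynomial σ R)))
    {h : Polynomial ℤ}
    (hh : (h : PowerSeries ℤ) = hilbertSeries I * (1 - PowerSeries.X) ^ L.length)
    {m : σ →₀ ℕ} (hm : Minimal (fun m => monomial m (1 : R) ∈ I) m) :
    m.degree ≤ h.natDegree + 1 := by
  rcases eq_or_ne m 0 with rfl | hm0
  · simp
  obtain ⟨k, hk⟩ := Finsupp.ne_iff.1 hm0
  obtain ⟨m, rfl⟩ := exists_eq_add_single hk
  have degree_le : m.degree ≤ h.natDegree := by
    by_contra! hdeg
    refine monomial_notMem_of_minimal_add_single hm (monomial_mem_of_natDegree_lt hI hL hh ?_ hdeg)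
    exact fun l hl => (add_eq_zero.1 (eq_zero_of_minimal hI hL hm l hl)).1
  simpa using degree_le

end RegularVariables

section Dimension

variable {σ R : Type*}

lemma ringKrullDim_add_card_le [CommRing R] [IsNoetherianRing R] [Finite σ]
    {I : Ideal (MvPolynomial σ R)} (T : Set σ) (hI : I ≤ Ideal.span (X '' Tᶜ)) :
    ringKrullDim R + Nat.card T ≤ ringKrullDim (MvPolynomial σ R ⧸ I) := by
  let φ : MvPolynomial σ R →ₐ[R] MvPolynomial T R := killCompl Subtype.val_injective
  have le_ker : I ≤ RingHom.ker φ := by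
    refine hI.trans (Ideal.span_le.2 ?_)
    rintro _ ⟨i, hi, rfl⟩
    simp_all [φ, killCompl]
  have lift_surjective : Function.Surjective (Ideal.Quotient.lift I φ.toRingHom le_ker) :=
    Ideal.Quotient.lift_surjective_of_surjective I _
      fun f => ⟨rename Subtype.val f, killCompl_rename_app _ f⟩
  rw [← MvPolynomial.ringKrullDim_of_isNoetherianRing]
  exact ringKrullDim_le_of_surjective _ lift_surjective

lemma exists_monomial_mem_of_ringKrullDim_lt [Field R] [Finite σ]
    {I : Ideal (MvPolynomial σ R)} (hI : IsMonomialIdeal I) {T : Set σ}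
    (hT : ringKrullDim (MvPolynomial σ R ⧸ I) < Nat.card T) :
    ∃ m : σ →₀ ℕ, monomial m (1 : R) ∈ I ∧ ∀ k ∉ T, m k = 0 := by
  contrapose! hT
  suffices I ≤ Ideal.span (X '' Tᶜ) by
    simpa using ringKrullDim_add_card_le T this
  intro f hf
  rw [mem_ideal_span_X_image]
  exact fun m hm => hT m (hI.mem_iff.1 hf m hm)

end Dimension

section Finiteness

variable {σ R : Type*} [CommRing R] [Finite σ]

lemma finite_of_surjective_of_isNilpotent_X {A : Type*} [CommRing A] [Algebra R A]
    (φ : MvPolynomial σ R →ₐ[R] A) (hφ : Function.Surjective φ)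
    (hX : ∀ i, IsNilpotent (φ (X i))) : Module.Finite R A := by
  have adjoin_eq_top : Algebra.adjoin R (Set.range (φ ∘ X)) = ⊤ := by
    rw [Algebra.adjoin_range_eq_range_aeval, ← aeval_unique, AlgHom.range_eq_top]
    exact hφ
  have adjoin_finite := Algebra.finite_adjoin_of_finite_of_isIntegral (R := R)
    (Set.finite_range (φ ∘ X)) (by
      rintro _ ⟨i, rfl⟩
      obtain ⟨k, hk⟩ := hX i
      exact ⟨Polynomial.X ^ k, Polynomial.monic_X_pow k, by simpa using hk⟩)
  rw [adjoin_eq_top] at adjoin_finite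
  exact .equiv Subalgebra.topEquiv.toLinearEquiv

lemma finite_quotient_quotient_of_pow_mem {I : Ideal (MvPolynomial σ R)}
    {J : Ideal (MvPolynomial σ R ⧸ I)}
    (h : ∀ i, (∃ k, X i ^ k ∈ I) ∨ Ideal.Quotient.mk I (X i) ∈ J) :
    Module.Finite R ((MvPolynomial σ R ⧸ I) ⧸ J) := by
  let φ : MvPolynomial σ R →ₐ[R] (MvPolynomial σ R ⧸ I) ⧸ J :=
    (Ideal.Quotient.mkₐ R J).comp (Ideal.Quotient.mkₐ R I)
  have surjective : Function.Surjective φ :=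
    (Ideal.Quotient.mkₐ_surjective R J).comp (Ideal.Quotient.mkₐ_surjective R I)
  suffices isNilpotent : ∀ i, IsNilpotent (φ (X i)) from
    finite_of_surjective_of_isNilpotent_X (A := (MvPolynomial σ R ⧸ I) ⧸ J) φ surjective isNilpotent
  intro i
  change IsNilpotent (Ideal.Quotient.mk J (Ideal.Quotient.mk I (X i)))
  rcases h i with ⟨k, hk⟩ | hi
  · exact ⟨k, by rw [← map_pow, ← map_pow, Ideal.Quotient.eq_zero_iff_mem.2 hk, map_zero]⟩
  · exact ⟨1, by rw [pow_one, Ideal.Quotient.eq_zero_iff_mem.2 hi]⟩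

end Finiteness

namespace IsStableMonomialIdeal

variable {n : ℕ}

lemma isMonomialIdeal {R : Type*} [CommSemiring R] {I : Ideal (MvPolynomial (Fin n) R)}
    (hI : IsStableMonomialIdeal I) : IsMonomialIdeal I :=
  hI.1

/-- Stability lets one replace the variables of `m` by `x_i`, the last one first. -/
lemma monomial_single_degree_mem {R : Type*} [CommSemiring R] {I : Ideal (MvPolynomial (Fin n) R)}
    (hI : IsStableMonomialIdeal I) (i : Fin n) {m : Fin n →₀ ℕ} (hm : monomial m (1 : R) ∈ I)
    (hmi : ∀ j < i, m j = 0) : monomial (Finsupp.single i m.degree) (1 : R) ∈ I := by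
  induction hq : m.degree - m i using Nat.strong_induction_on generalizing m with | _ q ih
  by_cases hsupp : m.support ⊆ {i}
  · rw [Finsupp.support_subset_singleton] at hsupp
    rw [hsupp] at hm ⊢
    simpa using hm
  obtain ⟨l, hl, hli⟩ := Finset.not_subset.1 hsupp
  obtain ⟨j, hj, hjmax⟩ := m.support.exists_max_image id ⟨l, hl⟩
  rw [Finsupp.mem_support_iff] at hj hl
  have i_lt_j : i < j := by
    refine lt_of_lt_of_le (lt_of_le_of_ne ?_ ?_) (hjmax l (Finsupp.mem_support_iff.2 hl))
    · exact le_of_not_gt fun hlt => hl (hmi l hlt)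
    · exact fun hil => hli (Finset.mem_singleton.2 hil.symm)
  have replaced_mem := hI.2 m hm j hj (fun l hjl => by
    by_contra hl
    exact (hjmax l (Finsupp.mem_support_iff.2 hl)).not_gt hjl) i i_lt_j
  obtain ⟨m, rfl⟩ := exists_eq_add_single hj
  rw [add_right_comm, add_tsub_cancel_right] at replaced_mem
  have degree_eq : (m + Finsupp.single i 1).degree = (m + Finsupp.single j 1).degree := by simp
  rw [← degree_eq]
  refine ih _ ?_ replaced_mem (fun l hl => ?_) rfl
  · have := Finsupp.le_degree i m
    simp only [← hq, map_add, Finsupp.degree_single, Finsupp.add_apply, Finsupp.single_eq_same,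
      Finsupp.single_eq_of_ne i_lt_j.ne, add_zero]
    omega
  · have := hmi l hl
    simp_all [hl.ne]

variable {K : Type*} [Field K] {I : Ideal (MvPolynomial (Fin n) K)} {d : ℕ}

lemma exists_X_pow_mem (hI : IsStableMonomialIdeal I)
    (hd : ringKrullDim (MvPolynomial (Fin n) K ⧸ I) ≤ d) {i : Fin n} (hi : i + d < n) :
    ∃ k, (X i : MvPolynomial (Fin n) K) ^ k ∈ I := by
  have dim_lt_card : ringKrullDim (MvPolynomial (Fin n) K ⧸ I) < Nat.card (Set.Ici i) := by
    refine hd.trans_lt ?_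
    rw [← Finset.coe_Ici, Nat.card_coe_set_eq, Set.ncard_coe_finset, Fin.card_Ici]
    exact_mod_cast Nat.lt_sub_of_add_lt (by omega)
  obtain ⟨m, hm, hmi⟩ := exists_monomial_mem_of_ringKrullDim_lt hI.isMonomialIdeal dim_lt_card
  refine ⟨m.degree, ?_⟩
  rw [X_pow_eq_monomial]
  exact hI.monomial_single_degree_mem i hm fun j hj => hmi j (by simpa using hj)

theorem finite_quotient_quotient (hI : IsStableMonomialIdeal I)
    (hd : ringKrullDim (MvPolynomial (Fin n) K ⧸ I) ≤ d) {J : Ideal (MvPolynomial (Fin n) K ⧸ I)}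
    (hJ : ∀ i : Fin n, n ≤ i + d → Ideal.Quotient.mk I (X i) ∈ J) :
    Module.Finite K ((MvPolynomial (Fin n) K ⧸ I) ⧸ J) :=
  finite_quotient_quotient_of_pow_mem fun i =>
    (lt_or_ge (i + d) n).imp (hI.exists_X_pow_mem hd) (hJ i)

end IsStableMonomialIdeal

/-- **Lemma 3.3(ii), Kubitzke–Murai.**
Let `S = K[x₁,…,x_n]` and let `I ⊆ S` be a stable monomial ideal such that `S/I` is a
Cohen-Macaulay graded `K`-algebra of Krull dimension `d` (Cohen-Macaulayness being expressed
by the statement that every linear system of parameters is a regular sequence).  Then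
`x_n, x_{n-1}, …, x_{n-d+1}` is a linear system of parameters for `S/I` (they are degree-one
elements and the quotient by them is a finite-dimensional `K`-vector space), and `I` is
generated by monomials of degree `≤ deg h_{S/I}(t) + 1`, where `h = h_{S/I}(t)` is the
`h`-polynomial of `S/I`, i.e. `Hilb(S/I, t) = h/(1-t)^d`.
(The variable `x_i` of the paper corresponds to the index `i - 1 : Fin n`, so the `j`-th
element of the sequence, `j = 0,…,d-1`, is `x_{n-j}`, of index `n-1-j`.) -/
theorem stable_ideal_lsop_and_generators
    (K : Type*) [Field K] (n : ℕ)
    (I : Ideal (MvPolynomial (Fin n) K))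
    (hI : IsStableMonomialIdeal I)
    (d : ℕ) (hdn : d ≤ n)
    (hdim : ringKrullDim (MvPolynomial (Fin n) K ⧸ I) = d)
    (hCM : ∀ θ' : Fin d → MvPolynomial (Fin n) K ⧸ I,
      (∀ j, θ' j ∈ Submodule.map (Ideal.Quotient.mkₐ K I).toLinearMap
        (homogeneousSubmodule (Fin n) K 1)) →
      Module.Finite K ((MvPolynomial (Fin n) K ⧸ I) ⧸ Ideal.span (Set.range θ')) →
      RingTheory.Sequence.IsRegular (MvPolynomial (Fin n) K ⧸ I) (List.ofFn θ'))
    (h : Polynomial ℤ)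
    (hh : (h : PowerSeries ℤ) =
      (PowerSeries.mk fun i => (Module.finrank K
        (Submodule.map (Ideal.Quotient.mkₐ K I).toLinearMap
          (homogeneousSubmodule (Fin n) K i)) : ℤ)) * (1 - PowerSeries.X) ^ d) :
    letI ϑ : Fin d → MvPolynomial (Fin n) K ⧸ I := fun j =>
      Ideal.Quotient.mk I (X ⟨n - 1 - j.1, by have := j.2; omega⟩)
    ((∀ j, ϑ j ∈ Submodule.map (Ideal.Quotient.mkₐ K I).toLinearMap
        (homogeneousSubmodule (Fin n) K 1)) ∧
      Module.Finite K ((MvPolynomial (Fin n) K ⧸ I) ⧸ Ideal.span (Set.range ϑ))) ∧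
    ∃ M : Set (Fin n →₀ ℕ),
      (∀ m ∈ M, m.degree ≤ h.natDegree + 1) ∧
      I = Ideal.span ((fun m => (monomial m (1 : K) : MvPolynomial (Fin n) K)) '' M) := by
  let lastVariables : Fin d → Fin n := fun j => ⟨n - 1 - j.1, by have := j.2; omega⟩
  let ϑ : Fin d → MvPolynomial (Fin n) K ⧸ I := fun j => Ideal.Quotient.mk I (X (lastVariables j))
  have linear : ∀ j, ϑ j ∈ Submodule.map (Ideal.Quotient.mkₐ K I).toLinearMap
      (homogeneousSubmodule (Fin n) K 1) := fun j => ⟨X _, isHomogeneous_X K _, rfl⟩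
  have finite : Module.Finite K ((MvPolynomial (Fin n) K ⧸ I) ⧸ Ideal.span (Set.range ϑ)) := by
    refine hI.finite_quotient_quotient hdim.le fun i hi => Ideal.subset_span ?_
    have eq_last : lastVariables ⟨n - 1 - i, by omega⟩ = i := Fin.ext (by grind)
    exact ⟨_, congrArg (fun k => Ideal.Quotient.mk I (X k)) eq_last⟩
  have regular : RingTheory.Sequence.IsWeaklyRegular (MvPolynomial (Fin n) K ⧸ I)
      ((List.ofFn lastVariables).map (X : Fin n → MvPolynomial (Fin n) K)) := by
    rw [← RingTheory.Sequence.isWeaklyRegular_map_algebraMap_iff (MvPolynomial (Fin n) K ⧸ I),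
      List.map_map, List.map_ofFn]
    exact (hCM ϑ linear finite).toIsWeaklyRegular
  refine ⟨⟨linear, finite⟩, _, fun m hm => ?_, hI.isMonomialIdeal.eq_span_minimal⟩
  exact degree_le_of_minimal hI.isMonomialIdeal regular (by rwa [List.length_ofFn]) hm
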